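/- Let f be a self-usage utility function and let 0 ≤ p < q < f'(0). Let s₀, s ∈ [0,1) satisfy f'(1−s₀) = p and f'(1−s) = q. Then for every subsidy program W and every maximizer s̃ of σ ↦ f(1−σ) + p·σ + W(σ) over [0,1], the platform's revenue satisfies (q−p)·s̃ − W(s̃) ≤ (q−p)·s − (f(1−s₀) − f(1−s) − p·(s−s₀)). (This upper bound equals B*·t* for the linear loyalty program with B* = q−p and t* = s − (f(1−s₀) − f(1−s) − p·(s−s₀))/(q−p), so no subsidy program can yield more revenue than the optimal linear loyalty program.) -/

import Mathlib

/-- A self-usage utility function `f` with derivative `f'`: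
differentiable on `[0,1]`, strictly increasing on `[0,1]`,
strictly concave on `[0,1]` (with `f'` strictly decreasing), and `f' 1 = 0`. -/
def SelfUsage (f f' : ℝ → ℝ) : Prop :=
  (∀ x ∈ Set.Icc (0:ℝ) 1, HasDerivWithinAt f (f' x) (Set.Icc (0:ℝ) 1) x) ∧
  StrictMonoOn f (Set.Icc (0:ℝ) 1) ∧
  StrictConcaveOn ℝ (Set.Icc (0:ℝ) 1) f ∧
  StrictAntiOn f' (Set.Icc (0:ℝ) 1) ∧
  f' 1 = 0

/-- A subsidy program: nondecreasing on `[0,1]`, zero at `0`, nonnegative. -/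
def SubsidyProgram (W : ℝ → ℝ) : Prop :=
  MonotoneOn W (Set.Icc (0:ℝ) 1) ∧ W 0 = 0 ∧ ∀ σ ∈ Set.Icc (0:ℝ) 1, 0 ≤ W σ

/-!
When renters pay `q` per unit of sharing, the owner's utility and the platform's revenue always add
up to `f (1 - σ) + q * σ`, since base pay and subsidy are transfers between the two. By concavity
this surplus is largest at `σ = s`, where its derivative `q - f' (1 - s)` vanishes. Subsidies being
nonnegative, the owner can secure `f (1 - s₀) + p * s₀` by sharing `s₀`, so the platform keeps at
most the maximal surplus minus this amount.
-/

theorem concaveOn_le_tangentLine {f : ℝ → ℝ} {S : Set ℝ} {x y m : ℝ} (hf : ConcaveOn ℝ S f)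
    (hx : x ∈ S) (hy : y ∈ S) (hm : HasDerivWithinAt f m S x) : f y ≤ f x + m * (y - x) := by
  rcases lt_trichotomy x y with hxy | rfl | hyx
  · have hslope : (f y - f x) / (y - x) ≤ m :=
      slope_def_field f x y ▸ hf.slope_le_of_hasDerivWithinAt hx hy hxy hm
    linarith [(div_le_iff₀ (sub_pos.2 hxy)).1 hslope]
  · simp
  · have hslope : m ≤ (f x - f y) / (x - y) :=
      slope_def_field f y x ▸ hf.le_slope_of_hasDerivWithinAt hy hx hyx hm
    linarith [(le_div_iff₀ (sub_pos.2 hyx)).1 hslope]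

/-- The utility of sharing `σ` and using `1 - σ` oneself when sharing is paid `r` per unit. At the
base pay it is the owner's utility before subsidies; at the renter price it is the total surplus of
owner and platform. -/
def sharingUtility (f : ℝ → ℝ) (r σ : ℝ) : ℝ := f (1 - σ) + r * σ

theorem isMaxOn_sharingUtility {f : ℝ → ℝ} {S : Set ℝ} {r s : ℝ} (hf : ConcaveOn ℝ S f)
    (hs : 1 - s ∈ S) (hr : HasDerivWithinAt f r S (1 - s)) :
    IsMaxOn (sharingUtility f r) ((1 - ·) ⁻¹' S) s := by
  refine isMaxOn_iff.2 fun σ hσ => ?_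
  have htangent : f (1 - σ) ≤ f (1 - s) + r * (1 - σ - (1 - s)) :=
    concaveOn_le_tangentLine hf hs hσ hr
  unfold sharingUtility
  linarith

theorem revenue_eq_sharingUtility_sub (f : ℝ → ℝ) (p q σ w : ℝ) :
    (q - p) * σ - w = sharingUtility f q σ - (sharingUtility f p σ + w) := by
  unfold sharingUtility
  ring

theorem optimal_LLP_revenue_upper_bound_general {f W : ℝ → ℝ} {S : Set ℝ} {p q s₀ s st : ℝ}
    (hf : ConcaveOn ℝ S f) (hs : 1 - s ∈ S) (hst : 1 - st ∈ S)
    (hq : HasDerivWithinAt f q S (1 - s)) (hW : 0 ≤ W s₀)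
    (hpref : f (1 - s₀) + p * s₀ + W s₀ ≤ f (1 - st) + p * st + W st) :
    (q - p) * st - W st ≤ (q - p) * s - (f (1 - s₀) - f (1 - s) - p * (s - s₀)) := by
  have hsurplus : sharingUtility f q st ≤ sharingUtility f q s :=
    isMaxOn_sharingUtility hf hs hq hst
  have howner : sharingUtility f p s₀ ≤ sharingUtility f p st + W st :=
    le_of_add_le_of_nonneg_left hpref hW
  calc (q - p) * st - W st
    _ = sharingUtility f q st - (sharingUtility f p st + W st) :=
      revenue_eq_sharingUtility_sub f p q st (W st)
    _ ≤ sharingUtility f q s - sharingUtility f p s₀ := sub_le_sub hsurplus howner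
    _ = (q - p) * s - (f (1 - s₀) - f (1 - s) - p * (s - s₀)) := by
      unfold sharingUtility
      ring

/-- no subsidy program can yield more revenue than the optimal
linear loyalty program in a homogeneous monopolistic market. -/
theorem optimal_LLP_revenue_upper_bound
    (f f' : ℝ → ℝ) (hf : SelfUsage f f')
    (p q : ℝ) (hp : 0 ≤ p) (hpq : p < q) (hq : q < f' 0)
    (s₀ s : ℝ) (hs₀ : s₀ ∈ Set.Ico (0:ℝ) 1) (hs : s ∈ Set.Ico (0:ℝ) 1)
    (hds₀ : f' (1 - s₀) = p) (hds : f' (1 - s) = q)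
    (W : ℝ → ℝ) (hW : SubsidyProgram W)
    (st : ℝ) (hst : st ∈ Set.Icc (0:ℝ) 1)
    (hmax : ∀ σ ∈ Set.Icc (0:ℝ) 1,
      f (1 - σ) + p * σ + W σ ≤ f (1 - st) + p * st + W st) :
    (q - p) * st - W st ≤ (q - p) * s - (f (1 - s₀) - f (1 - s) - p * (s - s₀)) := by
  have hs₀_mem : s₀ ∈ Set.Icc (0 : ℝ) 1 := Set.Ico_subset_Icc_self hs₀
  have hs_mem : 1 - s ∈ Set.Icc (0 : ℝ) 1 := Set.Icc.one_sub_mem (Set.Ico_subset_Icc_self hs)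
  exact optimal_LLP_revenue_upper_bound_general hf.2.2.1.concaveOn hs_mem (Set.Icc.one_sub_mem hst)
    (hds ▸ hf.1 _ hs_mem) (hW.2.2 s₀ hs₀_mem) (hmax s₀ hs₀_mem)
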